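/- arXiv:math/0408252 — 2 statements merged into one kernel-verified Lean document; each statement's English description precedes it below -/
import Mathlib

section
/- Let f and g be elements of G with reduced forms (x_1, …, x_r) and (y_1, …, y_r) respectively, where r > 1. Then f and g are H-conjugate if and only if there exist elements h_0, h_1, …, h_r of H with h_r = h_0 such that x_i = h_{i-1}^{-1} y_i h_i for every i = 1, 2, …, r. -/
universe u
open Monoid

/-- The `Bool`-indexed family of groups with value `A` at `true` and `B` at `false`. -/
def famG (A B : Type u) : Bool → Type u := fun i => Bool.rec B A i

instance famGGroup {A B : Type u} [Group A] [Group B] : ∀ i, Group (famG A B i) :=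
  fun i => Bool.rec (motive := fun i => Group (famG A B i)) ‹Group B› ‹Group A› i

/-- The `Bool`-indexed family of homomorphisms from `H`, with value `φA` at `true`
and `φB` at `false`. -/
def famPhi {A B H : Type u} [Group A] [Group B] [Group H] (φA : H →* A) (φB : H →* B) :
    ∀ i, H →* famG A B i :=
  fun i => Bool.rec (motive := fun i => H →* famG A B i) φB φA i

/-- The free product of `A` and `B` with amalgamated subgroup `H` (along the injections
`φA : H →* A` and `φB : H →* B`), realized as the pushout of `φA` and `φB`. -/
def Amal {A B H : Type u} [Group A] [Group B] [Group H] (φA : H →* A) (φB : H →* B) : Type u :=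
  PushoutI (famPhi φA φB)

instance {A B H : Type u} [Group A] [Group B] [Group H] (φA : H →* A) (φB : H →* B) :
    Group (Amal φA φB) :=
  inferInstanceAs (Group (PushoutI (famPhi φA φB)))

/-- The canonical homomorphism `A →* Amal φA φB`. -/
def inA {A B H : Type u} [Group A] [Group B] [Group H] (φA : H →* A) (φB : H →* B) :
    A →* Amal φA φB :=
  PushoutI.of (φ := famPhi φA φB) true

/-- The canonical homomorphism `B →* Amal φA φB`. -/
def inB {A B H : Type u} [Group A] [Group B] [Group H] (φA : H →* A) (φB : H →* B) :
    B →* Amal φA φB :=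
  PushoutI.of (φ := famPhi φA φB) false

/-- The canonical homomorphism `H →* Amal φA φB`. -/
def inH {A B H : Type u} [Group A] [Group B] [Group H] (φA : H →* A) (φB : H →* B) :
    H →* Amal φA φB :=
  PushoutI.base (famPhi φA φB)

/-- `IsReducedForm P Q R x g` says that the tuple `x = (x 0, …, x (r-1))` is a reduced form of
the element `g`, with respect to subgroups `P`, `Q`, `R` (playing the roles of the free factors
`A`, `B` and the amalgamated subgroup `H`): `g` is the (ordered) product of the components, every
component lies in `P ∪ Q`, and if `r > 1` then no component lies in `R` and no two consecutive
components lie both in `P` or both in `Q`. -/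
def IsReducedForm {G : Type*} [Group G] (P Q R : Subgroup G) {r : ℕ}
    (x : Fin r → G) (g : G) : Prop :=
  1 ≤ r ∧ (List.ofFn x).prod = g ∧ (∀ i, x i ∈ P ∨ x i ∈ Q) ∧
    (1 < r → (∀ i, x i ∉ R) ∧
      ∀ i : ℕ, (h : i + 1 < r) →
        ¬(x ⟨i, by omega⟩ ∈ P ∧ x ⟨i + 1, h⟩ ∈ P) ∧
        ¬(x ⟨i, by omega⟩ ∈ Q ∧ x ⟨i + 1, h⟩ ∈ Q))

/-- Alternating typed words: adjacent letters have different types, letters lie in the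
corresponding subgroup but not in `R`. -/
def AltWord {G : Type*} [Group G] (P : Bool → Subgroup G) (R : Subgroup G)
    (l : List (Bool × G)) : Prop :=
  l.IsChain (fun a b => a.1 ≠ b.1) ∧ ∀ p ∈ l, p.2 ∈ P p.1 ∧ p.2 ∉ R

theorem altWord_inv {G : Type*} [Group G] {P : Bool → Subgroup G} {R : Subgroup G}
    {l : List (Bool × G)} (h : AltWord P R l) :
    AltWord P R (l.map (fun p => (p.1, p.2⁻¹))).reverse := by
  refine ⟨?_, ?_⟩
  · rw [List.isChain_reverse, List.isChain_map]
    exact h.1.imp (fun a b hab => hab.symm)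
  · intro p hp
    simp only [List.mem_reverse, List.mem_map] at hp
    obtain ⟨q, hq, rfl⟩ := hp
    simpa using h.2 q hq

theorem altWord_inv_prod {G : Type*} [Group G] (l : List (Bool × G)) :
    (((l.map (fun p => (p.1, p.2⁻¹))).reverse).map Prod.snd).prod = (l.map Prod.snd).prod⁻¹ := by
  induction l with
  | nil => simp
  | cons a l ih => simp_all

/-- Gluing a reversed inverse word to a word. -/
theorem altWord_glue {G : Type*} [Group G] {P : Bool → Subgroup G} {R : Subgroup G}
    {l m : List (Bool × G)} {s : Bool} {z z' : G} (h : AltWord P R ((s, z) :: l))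
    (h' : AltWord P R ((s, z') :: m)) (w : G) (hw : w ∈ P s) (hwR : w ∉ R) :
    AltWord P R ((l.map (fun p => (p.1, p.2⁻¹))).reverse ++ (s, w) :: m) := by
  have h1 := altWord_inv h
  simp only [List.map_cons, List.reverse_cons] at h1
  refine ⟨?_, ?_⟩
  · have a1 := h1.1
    have a2 := h'.1
    rw [List.isChain_split]
    rw [List.isChain_append] at a1
    rw [List.isChain_cons] at a2
    refine ⟨?_, ?_⟩
    · rw [List.isChain_append]
      refine ⟨a1.1, by simp, ?_⟩
      intro x hx y hy
      have := a1.2.2 x hx (s, z⁻¹) (by simp)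
      simp at hy
      subst hy
      exact this
    · rw [List.isChain_cons]
      exact ⟨a2.1, a2.2⟩
  · intro p hp
    rw [List.mem_append, List.mem_cons] at hp
    rcases hp with hp | rfl | hp
    · exact h1.2 p (by simp only [List.mem_append]; exact Or.inl hp)
    · exact ⟨hw, hwR⟩
    · exact h'.2 p (List.mem_cons_of_mem _ hp)

theorem altWord_seq {G : Type*} [Group G] {P : Bool → Subgroup G} {R : Subgroup G}
    (hRP : ∀ i, R ≤ P i)
    (NT : ∀ l, AltWord P R l → (l.map Prod.snd).prod ∈ R → l = []) :
    ∀ (n : ℕ) (x y : Fin n → G) (s t : Fin n → Bool) (h k : G), h ∈ R → k ∈ R →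
      AltWord P R (List.ofFn fun i => (s i, x i)) →
      AltWord P R (List.ofFn fun i => (t i, y i)) →
      (List.ofFn x).prod = h⁻¹ * (List.ofFn y).prod * k →
      ∃ u : Fin (n + 1) → G, (∀ i, u i ∈ R) ∧ u 0 = h ∧ u (Fin.last n) = k ∧
        ∀ i : Fin n, x i = (u i.castSucc)⁻¹ * y i * u i.succ := by
  intro n
  induction n with
  | zero =>
    intro x y s t h k hh hk _ _ e
    refine ⟨fun _ => h, fun _ => hh, rfl, ?_, fun i => i.elim0⟩
    simp at e
    exact (inv_mul_eq_one.1 e.symm)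
  | succ n ih =>
    intro x y s t h k hh hk ax ay e
    rw [List.ofFn_succ] at ax ay
    have px : ∀ (x : Fin n → G) (s : Fin n → Bool),
        ((List.ofFn fun i => (s i, x i)).map Prod.snd).prod = (List.ofFn x).prod := by
      intro x s
      rw [List.map_ofFn]; rfl
    have ex := px (fun i => x i.succ) (fun i => s i.succ)
    have ey := px (fun i => y i.succ) (fun i => t i.succ)
    rw [List.ofFn_succ, List.ofFn_succ, List.prod_cons, List.prod_cons] at e
    have x0 := ax.2 _ List.mem_cons_self
    have y0 := ay.2 _ List.mem_cons_self
    simp only at x0 y0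
    have key : ((List.ofFn fun i : Fin n => x i.succ).prod)⁻¹ * ((x 0)⁻¹ * (h⁻¹ * y 0)) *
        (List.ofFn fun i : Fin n => y i.succ).prod = k⁻¹ := by
      rw [eq_inv_iff_mul_eq_one]
      have : h⁻¹ * (y 0 * (List.ofFn fun i : Fin n => y i.succ).prod) * k
        = h⁻¹ * y 0 * (List.ofFn fun i : Fin n => y i.succ).prod * k := by group
      rw [this] at e
      calc _ = ((x 0) * (List.ofFn fun i : Fin n => x i.succ).prod)⁻¹ *
            (h⁻¹ * y 0 * (List.ofFn fun i : Fin n => y i.succ).prod * k) := by group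
        _ = 1 := by rw [← e]; group
    have hR : (x 0)⁻¹ * (h⁻¹ * y 0) ∈ R := by
      by_contra hn
      have hy' : h⁻¹ * y 0 ∈ P (t 0) := (P _).mul_mem ((P _).inv_mem (hRP _ hh)) y0.1
      by_cases hst : s 0 = t 0
      · rw [← hst] at ay hy'
        have := NT _ (altWord_glue ax ay _ ((P _).mul_mem ((P _).inv_mem x0.1) hy') hn) (by
          rw [List.map_append, List.prod_append, altWord_inv_prod, List.map_cons, List.prod_cons,
            ex, ey, ← mul_assoc, key]
          exact R.inv_mem hk)
        simp at this
      · have hyR : h⁻¹ * y 0 ∉ R := by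
          rw [R.mul_mem_cancel_left (R.inv_mem hh)]; exact y0.2
        have ay2 : AltWord P R ((s 0, x 0) :: (t 0, h⁻¹ * y 0) ::
            List.ofFn fun i : Fin n => (t i.succ, y i.succ)) := by
          refine ⟨?_, ?_⟩
          · have := ay.1
            rw [List.isChain_cons] at this
            rw [List.isChain_cons_cons, List.isChain_cons]
            exact ⟨hst, this.1, this.2⟩
          · intro p hp
            rw [List.mem_cons, List.mem_cons] at hp
            rcases hp with rfl | rfl | hp
            · exact x0
            · exact ⟨hy', hyR⟩
            · exact ay.2 p (List.mem_cons_of_mem _ hp)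
        have := NT _ (altWord_glue ax ay2 (x 0)⁻¹ ((P _).inv_mem x0.1)
            (by rw [R.inv_mem_iff]; exact x0.2)) (by
          rw [List.map_append, List.prod_append, altWord_inv_prod, List.map_cons, List.prod_cons,
            List.map_cons, List.prod_cons, ex, ey]
          have := R.inv_mem hk
          rw [← key] at this
          simpa only [mul_assoc] using this)
        simp at this
    have tl : ∀ {a : Bool × G} {l}, AltWord P R (a :: l) → AltWord P R l :=
      fun h => ⟨(List.isChain_cons.1 h.1).2, fun p hp => h.2 p (List.mem_cons_of_mem _ hp)⟩
    obtain ⟨u, u1, u2, u3, u4⟩ := ih (fun i => x i.succ) (fun i => y i.succ) (fun i => s i.succ)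
      (fun i => t i.succ) ((x 0)⁻¹ * (h⁻¹ * y 0))⁻¹ k (R.inv_mem hR) hk (tl ax) (tl ay) (by
        rw [inv_inv]
        rw [mul_assoc, mul_assoc, mul_assoc, eq_inv_mul_iff_mul_eq, e]
        group)
    refine ⟨Fin.cons h u, ?_, rfl, ?_, ?_⟩
    · intro i
      refine Fin.cases hh (fun j => ?_) i
      simpa using u1 j
    · rw [← Fin.succ_last, Fin.cons_succ, u3]
    · intro i
      refine Fin.cases ?_ (fun j => ?_) i
      · rw [Fin.castSucc_zero, Fin.cons_zero, Fin.cons_succ, u2]; group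
      · rw [← Fin.succ_castSucc, Fin.cons_succ, Fin.cons_succ]; exact u4 j

theorem seq_telescope {G : Type*} [Group G] :
    ∀ (n : ℕ) (x y : Fin n → G) (u : Fin (n + 1) → G),
      (∀ i : Fin n, x i = (u i.castSucc)⁻¹ * y i * u i.succ) →
      (List.ofFn x).prod = (u 0)⁻¹ * (List.ofFn y).prod * u (Fin.last n) := by
  intro n
  induction n with
  | zero => intro x y u _; simp
  | succ n ih =>
    intro x y u e
    rw [List.ofFn_succ, List.ofFn_succ, List.prod_cons, List.prod_cons,
      ih (fun i => x i.succ) (fun i => y i.succ) (fun i => u i.succ) (fun i => by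
        rw [Fin.succ_castSucc]; exact e i.succ), e 0, Fin.castSucc_zero, Fin.succ_last]
    group

theorem amal_NT {A B H : Type u} [Group A] [Group B] [Group H]
    (φA : H →* A) (φB : H →* B)
    (hφA : Function.Injective φA) (hφB : Function.Injective φB)
    (l : List (Bool × PushoutI (famPhi φA φB)))
    (hl : AltWord (fun i => (PushoutI.of (φ := famPhi φA φB) i).range)
      (PushoutI.base (famPhi φA φB)).range l)
    (hp : (l.map Prod.snd).prod ∈ (PushoutI.base (famPhi φA φB)).range) : l = [] := by
  have hφ : ∀ i, Function.Injective (famPhi φA φB i) := by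
    intro i; cases i
    · exact hφB
    · exact hφA
  have hex : ∃ w : List (Σ i, famG A B i),
      w.map (fun a => (a.1, PushoutI.of (φ := famPhi φA φB) a.1 a.2)) = l := by
    have h2 := hl.2
    clear hl hp
    induction l with
    | nil => exact ⟨[], rfl⟩
    | cons a l ih =>
      obtain ⟨w, hw⟩ := ih (fun p hp => h2 p (List.mem_cons_of_mem _ hp))
      obtain ⟨⟨b, hb⟩, _⟩ := h2 a List.mem_cons_self
      refine ⟨⟨a.1, b⟩ :: w, ?_⟩
      rw [List.map_cons, hw, hb]
  obtain ⟨w, rfl⟩ := hex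
  have hred : ∀ a ∈ w, a.2 ∉ (famPhi φA φB a.1).range := by
    rintro a ha ⟨c, hc⟩
    refine (hl.2 _ (List.mem_map_of_mem ha)).2 ⟨c, ?_⟩
    simp only
    rw [← hc, PushoutI.of_apply_eq_base]
  let W : CoprodI.Word (famG A B) := ⟨w, fun a ha h1 => hred a ha (by
    rw [h1]; exact one_mem _), by
      have := hl.1
      rwa [List.isChain_map] at this⟩
  have : W = .empty := PushoutI.Reduced.eq_empty_of_mem_range (φ := famPhi φA φB) hφ
    (w := W) hred (by
      rw [CoprodI.Word.prod, map_list_prod, List.map_map]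
      rw [List.map_map] at hp
      have hfun : (⇑(PushoutI.ofCoprodI (φ := famPhi φA φB)) ∘
          fun a : (Σ i, famG A B i) => CoprodI.of a.snd) =
          Prod.snd ∘ fun a => (a.1, PushoutI.of (φ := famPhi φA φB) a.1 a.2) := by
        funext a
        simp [PushoutI.ofCoprodI_of]
      rw [hfun]
      exact hp)
  have : w = [] := congrArg CoprodI.Word.toList this
  rw [this]; rfl

theorem altWord_of_reduced {G : Type*} [Group G] (P : Bool → Subgroup G) (R : Subgroup G) {r : ℕ}
    (hr : 1 < r) (x : Fin r → G) (g : G) (hx : IsReducedForm (P true) (P false) R x g) :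
    ∃ s : Fin r → Bool, AltWord P R (List.ofFn fun i => (s i, x i)) := by
  classical
  obtain ⟨-, -, h1, h2⟩ := hx
  obtain ⟨h2, h3⟩ := h2 hr
  have hs : ∀ i, ∃ b, x i ∈ P b := fun i => (h1 i).elim (fun h => ⟨_, h⟩) (fun h => ⟨_, h⟩)
  choose s hs using hs
  refine ⟨s, ?_, ?_⟩
  · rw [List.isChain_iff_getElem]
    intro i hi
    simp only [List.length_ofFn] at hi
    simp only [List.getElem_ofFn]
    intro e
    have a := hs ⟨i, by omega⟩
    have b := hs ⟨i + 1, hi⟩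
    rw [← e] at b
    have := h3 i hi
    cases hc : s ⟨i, by omega⟩
    · rw [hc] at a b; exact this.2 ⟨a, b⟩
    · rw [hc] at a b; exact this.1 ⟨a, b⟩
  · intro p hp
    rw [List.mem_ofFn] at hp
    obtain ⟨i, rfl⟩ := hp
    exact ⟨hs i, h2 i⟩

/-- Let `f` and `g` be elements of the amalgamated free product `G = (A*B; H)` with reduced
forms `(x_1, …, x_r)` and `(y_1, …, y_r)`, where `r > 1`.  Then `f` and `g` are `H`-conjugate
iff there exist elements `h_0, h_1, …, h_r` of `H` with `h_r = h_0` such that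
`x_i = h_{i-1}⁻¹ y_i h_i` for every `i`. -/
theorem hConjugate_iff_exists_sequence {A B H : Type u} [Group A] [Group B] [Group H]
    (φA : H →* A) (φB : H →* B)
    (hφA : Function.Injective φA) (hφB : Function.Injective φB)
    {r : ℕ} (hr : 1 < r) (f g : Amal φA φB) (x y : Fin r → Amal φA φB)
    (hx : IsReducedForm (inA φA φB).range (inB φA φB).range (inH φA φB).range x f)
    (hy : IsReducedForm (inA φA φB).range (inB φA φB).range (inH φA φB).range y g) :
    (∃ h ∈ (inH φA φB).range, f = h⁻¹ * g * h) ↔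
      ∃ h : Fin (r + 1) → Amal φA φB, (∀ i, h i ∈ (inH φA φB).range) ∧
        h (Fin.last r) = h 0 ∧
        ∀ i : Fin r, x i = (h i.castSucc)⁻¹ * y i * h i.succ := by
  have aS := altWord_of_reduced
    (fun i => (PushoutI.of (φ := famPhi φA φB) i).range)
    (PushoutI.base (famPhi φA φB)).range hr x f hx
  have aT := altWord_of_reduced
    (fun i => (PushoutI.of (φ := famPhi φA φB) i).range)
    (PushoutI.base (famPhi φA φB)).range hr y g hy
  obtain ⟨s, aS⟩ := aS
  obtain ⟨t, aT⟩ := aT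
  have ef := hx.2.1
  have eg := hy.2.1
  constructor
  · rintro ⟨h, hh, e⟩
    rw [← ef, ← eg] at e
    obtain ⟨u, u1, u2, u3, u4⟩ := altWord_seq
      (P := fun i => (PushoutI.of (φ := famPhi φA φB) i).range)
      (R := (PushoutI.base (famPhi φA φB)).range)
      (by
        rintro i _ ⟨c, rfl⟩
        exact ⟨famPhi φA φB i c, PushoutI.of_apply_eq_base _ i c⟩)
      (amal_NT φA φB hφA hφB) r x y s t h h hh hh aS aT e
    exact ⟨u, u1, u3.trans u2.symm, u4⟩
  · rintro ⟨u, u1, u2, u3⟩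
    refine ⟨u 0, u1 0, ?_⟩
    rw [← ef, ← eg, seq_telescope r x y u u3, u2]
end

section
/- Suppose that H is contained in the center of A and in the center of B. Then for any element f of G not belonging to A, the set f^{-1} A f ∩ A = { f^{-1} x f : x ∈ A } ∩ A equals H. -/
universe u
open Monoid

namespace AltAux

open PushoutI

variable {ι : Type*} {G : ι → Type*} {K : Type*} [∀ i, Group (G i)] [Group K]

/-- Elements given by nonempty reduced words with first index `i` and last index `j`. -/
inductive Alt (φ : ∀ i, K →* G i) : ι → ι → PushoutI φ → Prop
  | single (i : ι) (x : G i) (hx : x ∉ (φ i).range) : Alt φ i i (of i x)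
  | cons (i k j : ι) (x : G i) (hx : x ∉ (φ i).range) (hik : i ≠ k) (g : PushoutI φ)
      (hg : Alt φ k j g) : Alt φ i j (of i x * g)

variable {φ : ∀ i, K →* G i}

theorem Alt.append {i j k l : ι} {g g' : PushoutI φ} (h : Alt φ i j g) (hjk : j ≠ k)
    (h' : Alt φ k l g') : Alt φ i l (g * g') := by
  induction h with
  | single i x hx => exact .cons _ _ _ x hx hjk _ h'
  | cons i k' j x hx hik g hg ih =>
    rw [mul_assoc]
    exact .cons _ _ _ x hx hik _ (ih hjk)

theorem Alt.inv {i j : ι} {g : PushoutI φ} (h : Alt φ i j g) : Alt φ j i g⁻¹ := by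
  induction h with
  | single i x hx =>
    rw [← map_inv]
    exact .single _ _ (by simpa using hx)
  | cons i k j x hx hik g hg ih =>
    rw [mul_inv_rev, ← map_inv]
    exact ih.append hik.symm (.single _ _ (by simpa using hx))

theorem Alt.exists_word {i j : ι} {g : PushoutI φ} (h : Alt φ i j g) :
    ∃ w : CoprodI.Word G, Reduced φ w ∧ ofCoprodI w.prod = g ∧ w.fstIdx = some i := by
  induction h with
  | single i x hx =>
    have hx1 : x ≠ 1 := by rintro rfl; exact hx (one_mem _)
    have he : (CoprodI.Word.empty : CoprodI.Word G).fstIdx ≠ some i := by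
      simp [CoprodI.Word.fstIdx, CoprodI.Word.empty]
    refine ⟨CoprodI.Word.cons x .empty he hx1, ?_, ?_, ?_⟩
    · intro g hg
      simp [CoprodI.Word.cons, CoprodI.Word.empty] at hg
      subst hg
      exact hx
    · rw [CoprodI.Word.prod_cons]
      simp
    · simp [CoprodI.Word.fstIdx, CoprodI.Word.cons]
  | cons i k j x hx hik g hg ih =>
    obtain ⟨w, hw, hp, hf⟩ := ih
    have hx1 : x ≠ 1 := by rintro rfl; exact hx (one_mem _)
    refine ⟨CoprodI.Word.cons x w (by rw [hf]; simpa using hik.symm) hx1, ?_, ?_, ?_⟩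
    · intro g hg
      simp only [CoprodI.Word.cons, List.mem_cons] at hg
      rcases hg with rfl | hg
      · exact hx
      · exact hw _ hg
    · simp [hp]
    · simp [CoprodI.Word.fstIdx, CoprodI.Word.cons]

theorem Alt.notMem {i j : ι} {g : PushoutI φ} (hφ : ∀ i, Function.Injective (φ i))
    (h : Alt φ i j g) : g ∉ (base φ).range := by
  intro hg
  obtain ⟨w, hw, rfl, hf⟩ := h.exists_word
  have := hw.eq_empty_of_mem_range hφ hg
  subst this
  simp [CoprodI.Word.fstIdx, CoprodI.Word.empty] at hf

theorem Alt.base_mul {i j : ι} {g : PushoutI φ} (h : Alt φ i j g) (c : K) :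
    Alt φ i j (base φ c * g) := by
  have key : ∀ (i : ι) (x : G i), x ∉ (φ i).range → φ i c * x ∉ (φ i).range := by
    intro i x hx h
    exact hx ((Subgroup.mul_mem_cancel_left _ (MonoidHom.mem_range.2 ⟨c, rfl⟩)).1 h)
  cases h with
  | single i x hx =>
    rw [← of_apply_eq_base φ i, ← map_mul]
    exact .single _ _ (key _ _ hx)
  | cons i k j x hx hik g hg =>
    rw [← of_apply_eq_base φ i, ← mul_assoc, ← map_mul]
    exact .cons _ _ _ _ (key _ _ hx) hik _ hg

theorem base_or_alt (hφ : ∀ i, Function.Injective (φ i)) (f : PushoutI φ) :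
    f ∈ (base φ).range ∨ ∃ i j, Alt φ i j f := by
  classical
  obtain ⟨d⟩ := NormalWord.transversal_nonempty φ hφ
  obtain ⟨w, rfl⟩ := (NormalWord.equiv (d := d)).symm.surjective f
  change w.prod ∈ _ ∨ ∃ i j, Alt φ i j w.prod
  have : (w.fstIdx = none ∧ w.prod ∈ (base φ).range) ∨
      ∃ i j, w.fstIdx = some i ∧ Alt φ i j w.prod := by
    induction w using NormalWord.consRecOn with
    | empty =>
      left
      exact ⟨rfl, by simp⟩
    | cons i g w hmw hgn hgr hw1 ih =>
      right
      rw [NormalWord.prod_cons]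
      rcases ih with ⟨-, c, hc⟩ | ⟨k, j, hk, hA⟩
      · refine ⟨i, i, by simp [CoprodI.Word.fstIdx, NormalWord.cons, CoprodI.Word.cons], ?_⟩
        rw [← hc, ← of_apply_eq_base φ i, ← map_mul]
        refine .single _ _ fun h => hgr ?_
        exact (Subgroup.mul_mem_cancel_right _ (MonoidHom.mem_range.2 ⟨c, rfl⟩)).1 h
      · refine ⟨i, j, by simp [CoprodI.Word.fstIdx, NormalWord.cons, CoprodI.Word.cons], ?_⟩
        refine .cons _ _ _ _ hgr ?_ _ hA
        rintro rfl
        exact hmw hk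
    | base c w hw ih =>
      rw [NormalWord.prod_smul]
      rcases ih with ⟨h1, h2⟩ | ⟨i, j, h1, h2⟩
      · exact Or.inl ⟨h1, mul_mem ⟨c, rfl⟩ h2⟩
      · exact Or.inr ⟨i, j, h1, h2.base_mul c⟩
  rcases this with h | ⟨i, j, -, h⟩
  · exact Or.inl h.2
  · exact Or.inr ⟨i, j, h⟩

section Two

variable {G : Bool → Type*} [∀ i, Group (G i)] {φ : ∀ i, K →* G i}

theorem Alt.strip_left {i : Bool} {g : PushoutI φ} (h : Alt φ true i g) :
    g ∈ (of (φ := φ) true).range ∨ ∃ x g', Alt φ false i g' ∧ g = of true x * g' := by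
  cases h with
  | single i x hx => exact Or.inl ⟨x, rfl⟩
  | cons i k j x hx hik g hg =>
    cases k
    · exact Or.inr ⟨x, g, hg, rfl⟩
    · exact absurd rfl hik

theorem Alt.strip_right {g : PushoutI φ} {j : Bool} (h : Alt φ false j g) :
    ∃ x g', Alt φ false false g' ∧ g = g' * of true x := by
  cases j
  · exact ⟨1, g, h, by simp⟩
  · have h' := h.inv
    generalize hk : g⁻¹ = k at h'
    cases h' with
    | cons i k j x hx hik g' hg =>
      cases k
      · refine ⟨x⁻¹, g'⁻¹, hg.inv, ?_⟩
        rw [map_inv, ← mul_inv_rev, ← hk, inv_inv]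
      · exact absurd rfl hik

theorem decomp (hφ : ∀ i, Function.Injective (φ i)) (f : PushoutI φ)
    (hf : f ∉ (of (φ := φ) true).range) :
    ∃ x y g, Alt φ false false g ∧ f = of true x * g * of true y := by
  rcases base_or_alt hφ f with ⟨c, rfl⟩ | ⟨i, j, h⟩
  · exact absurd ⟨φ true c, of_apply_eq_base φ true c⟩ hf
  · cases i
    · obtain ⟨y, g, hg, rfl⟩ := h.strip_right
      exact ⟨1, y, g, hg, by simp⟩
    · rcases h.strip_left with h | ⟨x, g', hg', rfl⟩
      · exact absurd h hf
      · obtain ⟨y, g, hg, rfl⟩ := hg'.strip_right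
        exact ⟨x, y, g, hg, by simp [mul_assoc]⟩

theorem base_central (hc : ∀ i c, φ i c ∈ Subgroup.center (G i)) (c : K) (f : PushoutI φ) :
    f * base φ c = base φ c * f := by
  induction f using PushoutI.induction_on with
  | of i g =>
    rw [← of_apply_eq_base φ i, ← map_mul, ← map_mul, Subgroup.mem_center_iff.1 (hc i c) g]
  | base h =>
    rw [← of_apply_eq_base φ true c, ← of_apply_eq_base φ true h, ← map_mul (of true),
      ← map_mul (of true), Subgroup.mem_center_iff.1 (hc true c)]
  | mul x y hx hy => rw [mul_assoc, hy, ← mul_assoc, hx, mul_assoc]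

theorem main (hφ : ∀ i, Function.Injective (φ i))
    (hc : ∀ i c, φ i c ∈ Subgroup.center (G i)) (f : PushoutI φ)
    (hf : f ∉ (of (φ := φ) true).range) (a b : G true)
    (hab : f⁻¹ * of true a * f = of true b) : ∃ c, base φ c = of true b := by
  obtain ⟨x, y, g, hg, rfl⟩ := decomp hφ f hf
  have e : g⁻¹ * of true (x⁻¹ * a * x) * g = of true (y * b * y⁻¹) := by
    simp only [map_mul, map_inv, ← hab]
    group
  by_cases ha : x⁻¹ * a * x ∈ (φ true).range
  · obtain ⟨c, hc'⟩ := ha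
    refine ⟨c, ?_⟩
    rw [← hc', of_apply_eq_base, mul_assoc, ← base_central hc, inv_mul_cancel_left] at e
    have := base_central hc c (of true y)
    rw [e] at this
    simp only [map_mul, map_inv] at this
    rw [e]
    simp only [map_mul, map_inv]
    have h2 : of (φ := φ) true y * (of true y * of true b * (of true y)⁻¹)
      = of true y * of true b := by rw [this]; group
    exact mul_left_cancel h2
  · exfalso
    have hA : Alt φ false false (of true (y * b * y⁻¹)) := by
      rw [← e]
      exact (hg.inv.append (by decide) (.single _ _ ha)).append (by decide) hg
    by_cases hb : y * b * y⁻¹ ∈ (φ true).range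
    · obtain ⟨c, hc'⟩ := hb
      rw [← hc', of_apply_eq_base] at hA
      exact hA.notMem hφ ⟨c, rfl⟩
    · have := hA.append (by decide) (Alt.single (φ := φ) true _ hb).inv
      rw [mul_inv_cancel] at this
      exact this.notMem hφ (one_mem _)

end Two

end AltAux

/-- If `H` is contained in the center of `A` and in the center of `B`, then for any element `f`
of the amalgamated free product `G = (A*B; H)` not belonging to `A`, the set
`f⁻¹ A f ∩ A` equals `H` (all viewed inside `G`). -/
theorem conj_inter_eq_base {A B H : Type u} [Group A] [Group B] [Group H]
    (φA : H →* A) (φB : H →* B)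
    (hφA : Function.Injective φA) (hφB : Function.Injective φB)
    (hcA : ∀ h : H, φA h ∈ Subgroup.center A)
    (hcB : ∀ h : H, φB h ∈ Subgroup.center B)
    (f : Amal φA φB) (hf : f ∉ (inA φA φB).range) :
    ((fun x => f⁻¹ * x * f) '' ((inA φA φB).range : Set (Amal φA φB))) ∩
        ((inA φA φB).range : Set (Amal φA φB)) =
      ((inH φA φB).range : Set (Amal φA φB)) := by
  have hφ : ∀ i, Function.Injective (famPhi φA φB i) := by
    intro i
    cases i
    · exact hφB
    · exact hφA
  have hc : ∀ i c, famPhi φA φB i c ∈ Subgroup.center (famG A B i) := by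
    intro i
    cases i
    · exact hcB
    · exact hcA
  ext z
  constructor
  · rintro ⟨⟨_, ⟨a, rfl⟩, hab⟩, ⟨b, rfl⟩⟩
    exact AltAux.main (φ := famPhi φA φB) hφ hc f hf a b hab
  · rintro ⟨c, rfl⟩
    have hr : inA φA φB (φA c) = inH φA φB c :=
      PushoutI.of_apply_eq_base (famPhi φA φB) true c
    refine ⟨⟨inH φA φB c, ⟨φA c, hr⟩, ?_⟩, ⟨φA c, hr⟩⟩
    have h2 : f * inH φA φB c = inH φA φB c * f :=
      AltAux.base_central (φ := famPhi φA φB) hc c f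
    change f⁻¹ * inH φA φB c * f = _
    rw [mul_assoc, ← h2, inv_mul_cancel_left]
end
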